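/- Jensen–Shannon divergence bound (Lemma JSBound): under the conditional-density setup, let P and Q be probability measures on 𝒲 and ξ ≥ 0, and suppose that for every d ∈ 𝒟 the map w ↦ f(d, w) is bounded with 0 < inf_{w∈𝒲} f(d, w) and sup_{w∈𝒲} f(d, w) ≤ e^{2ξ} · inf_{w∈𝒲} f(d, w). Then JS(G_Q ‖ G_P) ≤ (1/4)·(e^{2ξ} − 1)²·TV(P, Q)². -/

import Mathlib

open MeasureTheory
open scoped ENNReal

/-- Total variation distance between two measures: the supremum over measurable sets `A`
of `|P(A) − Q(A)|`. -/
noncomputable def tvDist {Ω : Type*} [MeasurableSpace Ω] (P Q : Measure Ω) : ℝ :=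
  ⨆ A : {s : Set Ω // MeasurableSet s}, |(P A.1).toReal - (Q A.1).toReal|

/-- Kullback–Leibler divergence `KL(μ₁ ‖ μ₂) = ∫ log(dμ₁/dμ₂) dμ₁`. -/
noncomputable def klDiv {Ω : Type*} [MeasurableSpace Ω] (μ₁ μ₂ : Measure Ω) : ℝ :=
  ∫ x, llr μ₁ μ₂ x ∂μ₁

/-- Jensen–Shannon divergence `JS(μ₁ ‖ μ₂) = (1/2) KL(μ₁ ‖ m) + (1/2) KL(μ₂ ‖ m)` with
`m = (μ₁ + μ₂)/2`. -/
noncomputable def jsDiv {Ω : Type*} [MeasurableSpace Ω] (μ₁ μ₂ : Measure Ω) : ℝ :=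
  (1 / 2) * klDiv μ₁ ((2 : ℝ≥0∞)⁻¹ • (μ₁ + μ₂)) + (1 / 2) * klDiv μ₂ ((2 : ℝ≥0∞)⁻¹ • (μ₁ + μ₂))

lemma abs_measureReal_sub_le_tvDist {Ω : Type*} [MeasurableSpace Ω] (P Q : Measure Ω)
    [IsProbabilityMeasure P] [IsProbabilityMeasure Q] {s : Set Ω} (hs : MeasurableSet s) :
    |P.real s - Q.real s| ≤ tvDist P Q := by
  refine le_ciSup (f := fun A : {s : Set Ω // MeasurableSet s} =>
    |(P A.1).toReal - (Q A.1).toReal|) ⟨1, ?_⟩ ⟨s, hs⟩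
  rintro _ ⟨A, rfl⟩
  have hP : P.real A.1 ≤ 1 := measureReal_le_one
  have hQ : Q.real A.1 ≤ 1 := measureReal_le_one
  have hP₀ : 0 ≤ P.real A.1 := measureReal_nonneg
  have hQ₀ : 0 ≤ Q.real A.1 := measureReal_nonneg
  change |P.real A.1 - Q.real A.1| ≤ 1
  exact abs_sub_le_iff.2 ⟨by linarith, by linarith⟩

/-- Integrals of a function with values in `[a, b]` against two probability measures differ by at
most `(b - a)` times the total variation distance. -/
lemma abs_integral_sub_integral_le_tvDist {Ω : Type*} [MeasurableSpace Ω] (P Q : Measure Ω)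
    [IsProbabilityMeasure P] [IsProbabilityMeasure Q] {h : Ω → ℝ} (hh : Measurable h) {a b : ℝ}
    (hab : a ≤ b) (hmem : ∀ x, h x ∈ Set.Icc a b) :
    |∫ x, h x ∂P - ∫ x, h x ∂Q| ≤ (b - a) * tvDist P Q := by
  have h_int (ν : Measure Ω) [IsProbabilityMeasure ν] : Integrable h ν :=
    Integrable.of_mem_Icc a b hh.aemeasurable (.of_forall hmem)
  have layer (ν : Measure Ω) [IsProbabilityMeasure ν] :
      ∫ x, h x ∂ν = (∫ t in Set.Ioc 0 (b - a), ν.real {x | t ≤ h x - a}) + a := by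
    rw [← Integrable.integral_eq_integral_Ioc_meas_le (f := fun x => h x - a)
      ((h_int ν).sub (integrable_const a)) (.of_forall fun x => sub_nonneg.2 (hmem x).1)
      (.of_forall fun x => sub_le_sub_right (hmem x).2 a)]
    simp [integral_sub (h_int ν) (integrable_const a)]
  have hanti (ν : Measure Ω) [IsProbabilityMeasure ν] :
      IntegrableOn (fun t => ν.real {x | t ≤ h x - a}) (Set.Ioc 0 (b - a)) := by
    have : Antitone fun t => ν.real {x | t ≤ h x - a} := fun s t hst =>
      measureReal_mono fun x (hx : t ≤ h x - a) => hst.trans hx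
    exact Integrable.of_mem_Icc 0 1 this.measurable.aemeasurable
      (.of_forall fun t => ⟨measureReal_nonneg, measureReal_le_one⟩)
  rw [layer P, layer Q, add_sub_add_right_eq_sub, ← integral_sub (hanti P) (hanti Q)]
  have := norm_setIntegral_le_of_norm_le_const (μ := volume) (s := Set.Ioc 0 (b - a))
    (f := fun t => P.real {x | t ≤ h x - a} - Q.real {x | t ≤ h x - a}) (C := tvDist P Q)
    measure_Ioc_lt_top fun t _ => abs_measureReal_sub_le_tvDist P Q
      (measurableSet_le measurable_const (hh.sub_const a))
  simpa [hab, mul_comm] using this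

lemma klFun_le_sq {x : ℝ} (hx : 0 ≤ x) : InformationTheory.klFun x ≤ (x - 1) ^ 2 := by
  rw [InformationTheory.klFun_apply]
  rcases hx.eq_or_lt with rfl | hx
  · simp
  · nlinarith [mul_le_mul_of_nonneg_left (Real.log_le_sub_one_of_pos hx) hx.le]

/-- Bound on the Kullback–Leibler divergence in terms of a uniform relative bound on densities. -/
lemma klDiv_withDensity_le_sq {D : Type*} [MeasurableSpace D] {μ : Measure D} {q m : D → ℝ}
    (hq : Measurable q) (hm : Measurable m) (hq₀ : ∀ d, 0 ≤ q d) (hm₀ : ∀ d, 0 < m d)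
    [IsProbabilityMeasure (μ.withDensity fun d => ENNReal.ofReal (q d))]
    [IsProbabilityMeasure (μ.withDensity fun d => ENNReal.ofReal (m d))]
    {a : ℝ} (h : ∀ d, |q d - m d| ≤ a * m d) :
    klDiv (μ.withDensity fun d => ENNReal.ofReal (q d))
      (μ.withDensity fun d => ENNReal.ofReal (m d)) ≤ a ^ 2 := by
  set G := μ.withDensity fun d => ENNReal.ofReal (q d) with hG
  set M := μ.withDensity fun d => ENNReal.ofReal (m d) with hM
  have hr : Measurable fun d => ENNReal.ofReal (q d / m d) := (hq.div hm).ennreal_ofReal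
  have hGM : G = M.withDensity fun d => ENNReal.ofReal (q d / m d) := by
    rw [hG, hM, ← withDensity_mul _ hm.ennreal_ofReal hr]
    congr 1
    ext d
    rw [Pi.mul_apply, ← ENNReal.ofReal_mul (hm₀ d).le, mul_div_cancel₀ _ (hm₀ d).ne']
  have hac : G ≪ M := hGM ▸ withDensity_absolutelyContinuous _ _
  have hderiv : G.rnDeriv M =ᵐ[M] fun d => ENNReal.ofReal (q d / m d) := by
    rw [hGM]
    exact Measure.rnDeriv_withDensity M hr
  rw [klDiv, ← InformationTheory.toReal_klDiv_of_measure_eq hac (by simp),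
    InformationTheory.toReal_klDiv_eq_integral_klFun hac]
  have hle : (fun d => InformationTheory.klFun (G.rnDeriv M d).toReal) ≤ᵐ[M] fun _ => a ^ 2 := by
    filter_upwards [hderiv] with d hd
    have hqm : 0 ≤ q d / m d := div_nonneg (hq₀ d) (hm₀ d).le
    rw [hd, ENNReal.toReal_ofReal hqm]
    refine (klFun_le_sq hqm).trans (sq_le_sq.2 (le_trans ?_ (le_abs_self a)))
    rw [div_sub_one (hm₀ d).ne', abs_div, abs_of_pos (hm₀ d)]
    exact (div_le_iff₀ (hm₀ d)).2 (h d)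
  simpa using integral_mono_of_nonneg
    (.of_forall fun d => InformationTheory.klFun_nonneg ENNReal.toReal_nonneg)
    (integrable_const _) hle

/-- A mixture of probability densities is a probability density. -/
lemma isProbabilityMeasure_withDensity_integral {W D : Type*} [MeasurableSpace W]
    [MeasurableSpace D] {μ : Measure D} [SigmaFinite μ] {f : D → W → ℝ}
    (hf : Measurable (Function.uncurry f)) (hf₀ : ∀ d w, 0 ≤ f d w)
    (hf₁ : ∀ w, ∫ d, f d w ∂μ = 1) (P : Measure W) [IsProbabilityMeasure P]
    (h_int : ∀ d, Integrable (f d) P) :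
    IsProbabilityMeasure (μ.withDensity fun d => ENNReal.ofReal (∫ w, f d w ∂P)) := by
  refine ⟨?_⟩
  rw [withDensity_apply _ .univ, Measure.restrict_univ]
  simp_rw [fun d => ofReal_integral_eq_lintegral_ofReal (h_int d) (.of_forall (hf₀ d))]
  rw [lintegral_lintegral_swap hf.ennreal_ofReal.aemeasurable]
  have hone (w : W) : ∫⁻ d, ENNReal.ofReal (f d w) ∂μ = 1 := by
    rw [← ofReal_integral_eq_lintegral_ofReal _ (.of_forall fun d => hf₀ d w), hf₁,
      ENNReal.ofReal_one]
    exact .of_integral_ne_zero (by simp [hf₁])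
  simp [hone]

/-- If `|p - q| ≤ a (p + q)` for two probability densities `p` and `q`, then the Jensen–Shannon
divergence of the corresponding measures is at most `a ^ 2`. -/
lemma jsDiv_withDensity_le_sq {D : Type*} [MeasurableSpace D] {μ : Measure D} {p q : D → ℝ}
    (hp : Measurable p) (hq : Measurable q) (hp₀ : ∀ d, 0 < p d) (hq₀ : ∀ d, 0 < q d)
    [IsProbabilityMeasure (μ.withDensity fun d => ENNReal.ofReal (p d))]
    [IsProbabilityMeasure (μ.withDensity fun d => ENNReal.ofReal (q d))]
    {a : ℝ} (h : ∀ d, |p d - q d| ≤ a * (p d + q d)) :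
    jsDiv (μ.withDensity fun d => ENNReal.ofReal (p d))
      (μ.withDensity fun d => ENNReal.ofReal (q d)) ≤ a ^ 2 := by
  have hm : Measurable fun d => 2⁻¹ * (p d + q d) := (hp.add hq).const_mul _
  have hmid : (2 : ℝ≥0∞)⁻¹ • ((μ.withDensity fun d => ENNReal.ofReal (p d)) +
      μ.withDensity fun d => ENNReal.ofReal (q d)) =
      μ.withDensity fun d => ENNReal.ofReal (2⁻¹ * (p d + q d)) := by
    rw [← withDensity_add_left hp.ennreal_ofReal,
      ← withDensity_smul _ (hp.ennreal_ofReal.add hq.ennreal_ofReal)]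
    congr 1
    ext d
    rw [ENNReal.ofReal_mul (by norm_num), ENNReal.ofReal_add (hp₀ d).le (hq₀ d).le,
      ENNReal.ofReal_inv_of_pos two_pos]
    simp
  have hprob : IsProbabilityMeasure
      (μ.withDensity fun d => ENNReal.ofReal (2⁻¹ * (p d + q d))) := by
    refine ⟨?_⟩
    rw [← hmid]
    simp [ENNReal.inv_two_add_inv_two]
  have hm₀ (d : D) : 0 < 2⁻¹ * (p d + q d) := by
    have := hp₀ d
    have := hq₀ d
    positivity
  have hpm := klDiv_withDensity_le_sq (μ := μ) (a := a) hp hm (fun d => (hp₀ d).le) hm₀ fun d => by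
    have := abs_le.1 (h d)
    exact abs_le.2 ⟨by linarith, by linarith⟩
  have hqm := klDiv_withDensity_le_sq (μ := μ) (a := a) hq hm (fun d => (hq₀ d).le) hm₀ fun d => by
    have := abs_le.1 (h d)
    exact abs_le.2 ⟨by linarith, by linarith⟩
  rw [jsDiv, hmid]
  linarith

/-- Jensen–Shannon divergence bound: in the conditional-density setup, if for every `d` the
conditional density `w ↦ f d w` is bounded with positive infimum and
`sup_w f d w ≤ e^{2ξ} · inf_w f d w`, then the induced marginal measures
`G_P = g_P · μ` and `G_Q = g_Q · μ` satisfy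
`JS(G_Q ‖ G_P) ≤ (1/4) (e^{2ξ} − 1)² TV(P, Q)²`. -/
theorem jsDiv_le_tvDist_sq
    {W D : Type*} [MeasurableSpace W] [MeasurableSpace D] [Nonempty W]
    (μ : Measure D) [SigmaFinite μ]
    (f : D → W → ℝ) (hf_meas : Measurable (Function.uncurry f))
    (hf_nonneg : ∀ d w, 0 ≤ f d w)
    (hf_density : ∀ w, ∫ d, f d w ∂μ = 1)
    (P Q : Measure W) [IsProbabilityMeasure P] [IsProbabilityMeasure Q]
    (ξ : ℝ) (hξ : 0 ≤ ξ)
    (hbdd : ∀ d, BddAbove (Set.range fun w => f d w))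
    (hinf_pos : ∀ d, 0 < ⨅ w, f d w)
    (hratio : ∀ d, (⨆ w, f d w) ≤ Real.exp (2 * ξ) * ⨅ w, f d w)
    (GP GQ : Measure D)
    (hGP : GP = μ.withDensity fun d => ENNReal.ofReal (∫ w, f d w ∂P))
    (hGQ : GQ = μ.withDensity fun d => ENNReal.ofReal (∫ w, f d w ∂Q)) :
    jsDiv GQ GP ≤ (1 / 4) * (Real.exp (2 * ξ) - 1) ^ 2 * tvDist P Q ^ 2 := by
  have hmem (d : D) (w : W) : f d w ∈ Set.Icc (⨅ w, f d w) (⨆ w, f d w) :=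
    ⟨ciInf_le ⟨0, by rintro _ ⟨w, rfl⟩; exact hf_nonneg d w⟩ w, le_ciSup (hbdd d) w⟩
  have hfd (d : D) : Measurable (f d) := hf_meas.of_uncurry_left
  have h_int (ν : Measure W) [IsProbabilityMeasure ν] (d : D) : Integrable (f d) ν :=
    Integrable.of_mem_Icc _ _ (hfd d).aemeasurable (.of_forall (hmem d))
  have hmeas (ν : Measure W) [IsProbabilityMeasure ν] : Measurable fun d => ∫ w, f d w ∂ν :=
    hf_meas.stronglyMeasurable.integral_prod_right.measurable
  have hinf_le (ν : Measure W) [IsProbabilityMeasure ν] (d : D) :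
      ⨅ w, f d w ≤ ∫ w, f d w ∂ν := by
    simpa using integral_mono (integrable_const _) (h_int ν d) fun w => (hmem d w).1
  have := isProbabilityMeasure_withDensity_integral hf_meas hf_nonneg hf_density P (h_int P)
  have := isProbabilityMeasure_withDensity_integral hf_meas hf_nonneg hf_density Q (h_int Q)
  have htv : 0 ≤ tvDist P Q := (abs_nonneg _).trans (abs_measureReal_sub_le_tvDist P Q .empty)
  have hexp : 0 ≤ Real.exp (2 * ξ) - 1 := sub_nonneg.2 (Real.one_le_exp (by positivity))
  have key := jsDiv_withDensity_le_sq (μ := μ) (a := 1 / 2 * ((Real.exp (2 * ξ) - 1) * tvDist P Q))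
    (hmeas Q) (hmeas P) (fun d => (hinf_pos d).trans_le (hinf_le Q d))
    (fun d => (hinf_pos d).trans_le (hinf_le P d)) fun d => by
      obtain ⟨w₀⟩ := ‹Nonempty W›
      rw [abs_sub_comm]
      calc |∫ w, f d w ∂P - ∫ w, f d w ∂Q|
          ≤ ((⨆ w, f d w) - ⨅ w, f d w) * tvDist P Q :=
            abs_integral_sub_integral_le_tvDist P Q (hfd d)
              ((hmem d w₀).1.trans (hmem d w₀).2) (hmem d)
        _ ≤ ((Real.exp (2 * ξ) - 1) * ⨅ w, f d w) * tvDist P Q := by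
            gcongr
            linarith [hratio d]
        _ = (Real.exp (2 * ξ) - 1) * tvDist P Q * ⨅ w, f d w := by ring
        _ ≤ (Real.exp (2 * ξ) - 1) * tvDist P Q *
              (1 / 2 * (∫ w, f d w ∂Q + ∫ w, f d w ∂P)) := by
            gcongr
            linarith [hinf_le P d, hinf_le Q d]
        _ = _ := by ring
  rw [hGP, hGQ]
  refine key.trans_eq ?_
  ring
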